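/- arXiv:1611.02537 — 2 statements merged into one kernel-verified Lean document; each statement's English description precedes it below -/
import Mathlib

section
/- (Induction invariant of Lemma 3) Let P be a semi-positive Datalog program, J an interpretation, k ≥ 1, and J₀, J₁, …, J_k a k-step derivation family for (P,J). Then for every 0 ≤ i ≤ k, the atoms derivable at level i under-approximate the i-fold iterate of the consequence operator on the extensional part of J: Jᵢ ⊆ T^i_{P, inp(P,J)}. -/
set_option autoImplicit false

namespace Datalog

universe u v w

variable {Preds : Type u} {Vars : Type v} {Vals : Type w} {ar : Preds → ℕ}

/-- A term is a variable or a value. -/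
inductive Term (Vars : Type v) (Vals : Type w) : Type (max v w) where
  | var : Vars → Term Vars Vals
  | val : Vals → Term Vars Vals

/-- An atom `p(t̄)` over terms. -/
structure Atom (Preds : Type u) (Vars : Type v) (Vals : Type w) (ar : Preds → ℕ) :
    Type (max u v w) where
  pred : Preds
  args : Fin (ar pred) → Term Vars Vals

/-- A literal: a positive or a negated atom. -/
inductive Lit (Preds : Type u) (Vars : Type v) (Vals : Type w) (ar : Preds → ℕ) :
    Type (max u v w) where
  | pos : Atom Preds Vars Vals ar → Lit Preds Vars Vals ar
  | neg : Atom Preds Vars Vals ar → Lit Preds Vars Vals ar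

def Lit.atom : Lit Preds Vars Vals ar → Atom Preds Vars Vals ar
  | .pos a => a
  | .neg a => a

def Lit.pred (l : Lit Preds Vars Vals ar) : Preds := l.atom.pred

def Lit.isPos : Lit Preds Vars Vals ar → Prop
  | .pos _ => True
  | .neg _ => False

def Lit.isNeg : Lit Preds Vars Vals ar → Prop
  | .pos _ => False
  | .neg _ => True

/-- A ground atom `p(v̄)`. -/
structure GAtom (Preds : Type u) (Vals : Type w) (ar : Preds → ℕ) : Type (max u w) where
  pred : Preds
  args : Fin (ar pred) → Vals

/-- An interpretation is a set of ground atoms. -/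
abbrev Interp (Preds : Type u) (Vals : Type w) (ar : Preds → ℕ) :=
  Set (GAtom Preds Vals ar)

def Atom.hasVar (a : Atom Preds Vars Vals ar) (x : Vars) : Prop :=
  ∃ i, a.args i = Term.var x

/-- A Datalog rule `a ← l₁,…,lₘ`: every variable in the head occurs in the body. -/
structure Rule (Preds : Type u) (Vars : Type v) (Vals : Type w) (ar : Preds → ℕ) :
    Type (max u v w) where
  head : Atom Preds Vars Vals ar
  body : List (Lit Preds Vars Vals ar)
  safe : ∀ x : Vars, head.hasVar x → ∃ l ∈ body, l.atom.hasVar x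

/-- A Datalog program: a finite set (list) of rules. -/
abbrev Program (Preds : Type u) (Vars : Type v) (Vals : Type w) (ar : Preds → ℕ) :=
  List (Rule Preds Vars Vals ar)

/-- Applying a substitution to a term. -/
def substT (σ : Vars → Vals) : Term Vars Vals → Vals
  | .var x => σ x
  | .val v => v

/-- `σ(a)`: grounding an atom by a substitution. -/
def Atom.ground (a : Atom Preds Vars Vals ar) (σ : Vars → Vals) : GAtom Preds Vals ar :=
  ⟨a.pred, fun i => substT σ (a.args i)⟩

/-- `A ⊢ σ(l)`. -/
def holds (A : Interp Preds Vals ar) (σ : Vars → Vals) : Lit Preds Vars Vals ar → Prop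
  | .pos a => a.ground σ ∈ A
  | .neg a => a.ground σ ∉ A

/-- The consequence operator `T_P`. -/
def T (P : Program Preds Vars Vals ar) (A : Interp Preds Vals ar) : Interp Preds Vals ar :=
  A ∪ { g | ∃ r ∈ P, ∃ σ : Vars → Vals, (∀ l ∈ r.body, holds A σ l) ∧ r.head.ground σ = g }

/-- `T^i_{P,I}`: iterates of the consequence operator. -/
def iter (P : Program Preds Vars Vals ar) (I : Interp Preds Vals ar) :
    ℕ → Interp Preds Vals ar
  | 0 => I
  | n + 1 => T P (iter P I n)

/-- The model `⟦P⟧_I = ⋃_{i≥0} T^i_{P,I}`. -/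
def model (P : Program Preds Vars Vals ar) (I : Interp Preds Vals ar) :
    Interp Preds Vals ar :=
  ⋃ n, iter P I n

/-- `p` is extensional for `P`: it occurs in no rule head. -/
def isEDB (P : Program Preds Vars Vals ar) (p : Preds) : Prop :=
  ∀ r ∈ P, r.head.pred ≠ p

/-- `p` is intensional for `P`: not extensional. -/
def isIDB (P : Program Preds Vars Vals ar) (p : Preds) : Prop := ¬ isEDB P p

/-- `inp(P, J)`: the extensional part of `J`. -/
def inp (P : Program Preds Vars Vals ar) (J : Interp Preds Vals ar) :
    Interp Preds Vals ar :=
  { a ∈ J | isEDB P a.pred }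

/-- An input for `P` contains only atoms over edb predicates. -/
def isInput (P : Program Preds Vars Vals ar) (I : Interp Preds Vals ar) : Prop :=
  ∀ a ∈ I, isEDB P a.pred

/-- `P` is semi-positive: negative body literals use only edb predicates. -/
def semiPositive (P : Program Preds Vars Vals ar) : Prop :=
  ∀ r ∈ P, ∀ a : Atom Preds Vars Vals ar, Lit.neg a ∈ r.body → isEDB P a.pred

/-- `J` is rule-closed for `P`. -/
def ruleClosed (P : Program Preds Vars Vals ar) (J : Interp Preds Vals ar) : Prop :=
  ∀ r ∈ P, ∀ σ : Vars → Vals, (∀ l ∈ r.body, holds J σ l) → r.head.ground σ ∈ J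

/-- Condition on a body literal in a k-step derivation family: a positive literal over an
idb predicate must have been derived at the previous level; otherwise (a literal over an
edb predicate) it must hold w.r.t. `J`. -/
def litStep (P : Program Preds Vars Vals ar) (J Fprev : Interp Preds Vals ar)
    (σ : Vars → Vals) : Lit Preds Vars Vals ar → Prop
  | .pos a => (isIDB P a.pred ∧ a.ground σ ∈ Fprev) ∨ (isEDB P a.pred ∧ a.ground σ ∈ J)
  | .neg a => a.ground σ ∉ J

/-- `F 0, F 1, …, F k` is a k-step derivation family for `(P, J)`. -/
def derivFamily (P : Program Preds Vars Vals ar) (J : Interp Preds Vals ar) (k : ℕ)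
    (F : ℕ → Interp Preds Vals ar) : Prop :=
  (∀ i ≤ k, ∀ a ∈ F i, isIDB P a.pred) ∧
  F 0 = ∅ ∧
  (∀ i, 1 ≤ i → i ≤ k → ∀ g : GAtom Preds Vals ar, isIDB P g.pred →
    (g ∈ F i ↔ ∃ r ∈ P, ∃ σ : Vars → Vals,
      r.head.ground σ = g ∧ ∀ l ∈ r.body, litStep P J (F (i - 1)) σ l))

/-- Monotone ground formulas: ground literals combined by ∧ and ∨. -/
inductive GForm (Preds : Type u) (Vals : Type w) (ar : Preds → ℕ) : Type (max u w) where
  | pos : GAtom Preds Vals ar → GForm Preds Vals ar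
  | neg : GAtom Preds Vals ar → GForm Preds Vals ar
  | conj : GForm Preds Vals ar → GForm Preds Vals ar → GForm Preds Vals ar
  | disj : GForm Preds Vals ar → GForm Preds Vals ar → GForm Preds Vals ar

/-- `A ⊨ φ`. -/
def sat (A : Interp Preds Vals ar) : GForm Preds Vals ar → Prop
  | .pos a => a ∈ A
  | .neg a => a ∉ A
  | .conj φ ψ => sat A φ ∧ sat A ψ
  | .disj φ ψ => sat A φ ∨ sat A ψ

/-- The k-rewriting of `φ` holds (w.r.t. `J` and the top level `Fk` of a derivation
family): positive idb literals are read in `Fk`, positive edb literals in `J`, and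
negative literals as non-membership in `J`. -/
def kRewrite (P : Program Preds Vars Vals ar) (J Fk : Interp Preds Vals ar) :
    GForm Preds Vals ar → Prop
  | .pos a => (isIDB P a.pred ∧ a ∈ Fk) ∨ (isEDB P a.pred ∧ a ∈ J)
  | .neg a => a ∉ J
  | .conj φ ψ => kRewrite P J Fk φ ∧ kRewrite P J Fk ψ
  | .disj φ ψ => kRewrite P J Fk φ ∨ kRewrite P J Fk ψ

/-- A positive property of interpretations. -/
def PositiveProp (φ : Interp Preds Vals ar → Prop) : Prop :=
  ∀ A A' : Interp Preds Vals ar, φ A → A ⊆ A' → φ A'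

/-- A negative property of interpretations. -/
def NegativeProp (φ : Interp Preds Vals ar → Prop) : Prop :=
  ∀ A A' : Interp Preds Vals ar, φ A → A' ⊆ A → φ A'

/-- `φ` contains only positive literals. -/
def onlyPos : GForm Preds Vals ar → Prop
  | .pos _ => True
  | .neg _ => False
  | .conj φ ψ => onlyPos φ ∧ onlyPos ψ
  | .disj φ ψ => onlyPos φ ∧ onlyPos ψ

/-- `φ` contains only negative literals. -/
def onlyNeg : GForm Preds Vals ar → Prop
  | .pos _ => False
  | .neg _ => True
  | .conj φ ψ => onlyNeg φ ∧ onlyNeg ψ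
  | .disj φ ψ => onlyNeg φ ∧ onlyNeg ψ

/-- The predicate `p` occurs in the program `P` (in a head or a body). -/
def occursIn (P : Program Preds Vars Vals ar) (p : Preds) : Prop :=
  ∃ r ∈ P, r.head.pred = p ∨ ∃ l ∈ r.body, l.pred = p

/-- All literals of `φ` use predicates occurring in `P`. -/
def formPredsIn (P : Program Preds Vars Vals ar) : GForm Preds Vals ar → Prop
  | .pos a => occursIn P a.pred
  | .neg a => occursIn P a.pred
  | .conj φ ψ => formPredsIn P φ ∧ formPredsIn P ψ
  | .disj φ ψ => formPredsIn P φ ∧ formPredsIn P ψ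

/-- `Ps 1, …, Ps n` is a stratification: whenever a predicate occurs in a positive
(resp. negative) body literal of a rule in stratum `i`, every rule with that head
predicate lies in a stratum `j ≤ i` (resp. `j < i`). -/
def stratifiedWith (Ps : ℕ → Program Preds Vars Vals ar) (n : ℕ) : Prop :=
  ∀ i, 1 ≤ i → i ≤ n → ∀ r ∈ Ps i, ∀ l ∈ r.body,
    ∀ j, 1 ≤ j → j ≤ n → ∀ r' ∈ Ps j, r'.head.pred = l.pred →
      (l.isPos → j ≤ i) ∧ (l.isNeg → j < i)

/-- The models `M₀ = I`, `Mᵢ = ⟦Pᵢ⟧_{M_{i-1}}` of the strata. -/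
def Msets (Ps : ℕ → Program Preds Vars Vals ar) (I : Interp Preds Vals ar) :
    ℕ → Interp Preds Vals ar
  | 0 => I
  | i + 1 => model (Ps (i + 1)) (Msets Ps I i)

/-!
One step of a derivation family reads positive idb literals in the previous level and all other
literals in `J`. Applying `T P` only adds atoms over idb predicates, so every iterate on `inp P J`
has the same extensional part as `J`. Semi-positivity then makes negative literals evaluate
identically in `J` and in the iterate, and an induction on the level applies.
-/

section ExtensionalPart

variable {P : Program Preds Vars Vals ar} {A B : Interp Preds Vals ar}

theorem inp_inp (P : Program Preds Vars Vals ar) (J : Interp Preds Vals ar) :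
    inp P (inp P J) = inp P J :=
  Set.ext fun _ => ⟨fun hg => hg.1, fun hg => ⟨hg, hg.2⟩⟩

theorem inp_T (P : Program Preds Vars Vals ar) (A : Interp Preds Vals ar) :
    inp P (T P A) = inp P A := by
  ext g
  constructor
  · rintro ⟨hgA | ⟨r, hr, σ, -, rfl⟩, hedb⟩
    · exact ⟨hgA, hedb⟩
    · exact absurd rfl (hedb r hr)
  · exact fun ⟨hgA, hedb⟩ => ⟨Or.inl hgA, hedb⟩

theorem inp_iter (P : Program Preds Vars Vals ar) (I : Interp Preds Vals ar) (n : ℕ) :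
    inp P (iter P I n) = inp P I := by
  induction n with
  | zero => rfl
  | succ n ih => exact (inp_T P (iter P I n)).trans ih

theorem mem_iff_mem_of_inp_eq (hAB : inp P A = inp P B) {g : GAtom Preds Vals ar}
    (hedb : isEDB P g.pred) : g ∈ A ↔ g ∈ B :=
  calc
    g ∈ A ↔ g ∈ inp P A := (and_iff_left hedb).symm
    _ ↔ g ∈ inp P B := by rw [hAB]
    _ ↔ g ∈ B := and_iff_left hedb

end ExtensionalPart

section DerivationStep

variable {P : Program Preds Vars Vals ar} {A J : Interp Preds Vals ar}

theorem holds_of_litStep {B : Interp Preds Vals ar} (hAJ : inp P A = inp P J) (hBA : B ⊆ A)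
    {σ : Vars → Vals} {l : Lit Preds Vars Vals ar} (hneg : l.isNeg → isEDB P l.pred)
    (hl : litStep P J B σ l) : holds A σ l := by
  cases l with
  | pos a =>
    rcases hl with ⟨-, haB⟩ | ⟨hedb, haJ⟩
    · exact hBA haB
    · exact (mem_iff_mem_of_inp_eq hAJ hedb).2 haJ
  | neg a => exact fun haA => hl ((mem_iff_mem_of_inp_eq hAJ (hneg trivial)).1 haA)

theorem semiPositive.isEDB_of_isNeg (hP : semiPositive P) {r : Rule Preds Vars Vals ar}
    (hr : r ∈ P) {l : Lit Preds Vars Vals ar} (hl : l ∈ r.body) (hneg : l.isNeg) :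
    isEDB P l.pred := by
  cases l with
  | pos a => exact hneg.elim
  | neg a => exact hP r hr a hl

theorem derivFamily.succ_subset_T {k : ℕ} {F : ℕ → Interp Preds Vals ar}
    (hF : derivFamily P J k F) (hP : semiPositive P) (hAJ : inp P A = inp P J) {i : ℕ}
    (hi : i + 1 ≤ k) (hFA : F i ⊆ A) : F (i + 1) ⊆ T P A := by
  obtain ⟨hidb, -, hstep⟩ := hF
  intro g hg
  obtain ⟨r, hr, σ, hhead, hbody⟩ :=
    (hstep (i + 1) i.succ_pos hi g (hidb (i + 1) hi g hg)).1 hg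
  have hholds : ∀ l ∈ r.body, holds A σ l := fun l hl =>
    holds_of_litStep hAJ hFA (hP.isEDB_of_isNeg hr hl) (hbody l hl)
  exact Or.inr ⟨r, hr, σ, hholds, hhead⟩

end DerivationStep

/-- induction invariant of Lemma 3: the levels of a k-step derivation
family under-approximate the iterates of the consequence operator on `inp(P,J)`. -/
theorem statement7 (P : Program Preds Vars Vals ar) (hP : semiPositive P)
    (J : Interp Preds Vals ar) (k : ℕ) (hk : 1 ≤ k)
    (F : ℕ → Interp Preds Vals ar) (hF : derivFamily P J k F) :
    ∀ i ≤ k, F i ⊆ iter P (inp P J) i := by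
  intro i
  induction i with
  | zero => exact fun _ => hF.2.1.subset.trans (Set.empty_subset _)
  | succ n ih =>
    intro hn
    have hinp : inp P (iter P (inp P J) n) = inp P J :=
      (inp_iter P (inp P J) n).trans (inp_inp P J)
    exact hF.succ_subset_T hP hinp hn (ih (Nat.le_of_succ_le hn))

end Datalog
end

section
/- Let P be a Datalog program that is stratified with strata P₁,…,Pₙ, let I be an input for P, and let M₀ = I and Mᵢ = ⋃_{j≥0} T^j_{Pᵢ, M_{i−1}} for 1 ≤ i ≤ n. Then for every 0 ≤ i ≤ n and every ground atom p(v̄) such that p is not an idb predicate of the program P_{i+1} ∪ … ∪ Pₙ, we have p(v̄) ∈ Mₙ if and only if p(v̄) ∈ Mᵢ; that is, higher strata do not add atoms over predicates defined at or below stratum i. -/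
set_option autoImplicit false

namespace Datalog

universe u v w

variable {Preds : Type u} {Vars : Type v} {Vals : Type w} {ar : Preds → ℕ}

section EDB

variable {P : Program Preds Vars Vals ar} {g : GAtom Preds Vals ar}

theorem mem_T_iff_of_isEDB (hg : isEDB P g.pred) (A : Interp Preds Vals ar) :
    g ∈ T P A ↔ g ∈ A := by
  refine ⟨?_, Or.inl⟩
  rintro (hA | ⟨r, hr, σ, -, rfl⟩)
  · exact hA
  · exact absurd rfl (hg r hr)

theorem mem_iter_iff_of_isEDB (hg : isEDB P g.pred) (I : Interp Preds Vals ar) (k : ℕ) :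
    g ∈ iter P I k ↔ g ∈ I := by
  induction k with
  | zero => exact Iff.rfl
  | succ k ih => exact (mem_T_iff_of_isEDB hg _).trans ih

theorem mem_model_iff_of_isEDB (hg : isEDB P g.pred) (I : Interp Preds Vals ar) :
    g ∈ model P I ↔ g ∈ I := by
  simp only [model, Set.mem_iUnion, mem_iter_iff_of_isEDB hg, exists_const]

end EDB

theorem statement12_general (Ps : ℕ → Program Preds Vars Vals ar) (I : Interp Preds Vals ar)
    {i n : ℕ} (hi : i ≤ n) {g : GAtom Preds Vals ar}
    (hg : ∀ j, i < j → j ≤ n → isEDB (Ps j) g.pred) :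
    g ∈ Msets Ps I n ↔ g ∈ Msets Ps I i := by
  induction n, hi using Nat.le_induction with
  | base => exact Iff.rfl
  | succ k hik ih =>
    calc g ∈ Msets Ps I (k + 1)
      _ ↔ g ∈ Msets Ps I k :=
        mem_model_iff_of_isEDB (hg (k + 1) (Nat.lt_succ_of_le hik) le_rfl) _
      _ ↔ g ∈ Msets Ps I i := ih fun j hij hjk => hg j hij (Nat.le_succ_of_le hjk)

/-- higher strata do not add atoms over predicates that are not idb
predicates of the union of the strata above `i`. -/
theorem statement12 (Ps : ℕ → Program Preds Vars Vals ar) (n : ℕ) (hn : 1 ≤ n)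
    (P : Program Preds Vars Vals ar)
    (hP : ∀ r, r ∈ P ↔ ∃ i, 1 ≤ i ∧ i ≤ n ∧ r ∈ Ps i)
    (hstrat : stratifiedWith Ps n)
    (I : Interp Preds Vals ar) (hI : isInput P I)
    (i : ℕ) (hi : i ≤ n)
    (g : GAtom Preds Vals ar)
    (hg : ∀ j, i < j → j ≤ n → ∀ r ∈ Ps j, r.head.pred ≠ g.pred) :
    (g ∈ Msets Ps I n ↔ g ∈ Msets Ps I i) :=
  statement12_general Ps I hi hg

end Datalog
end
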